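/- Existence of determinantal point processes on a countable set: let K : ℕ → ℕ → ℂ satisfy K j i = conj (K i j) for all i j (Hermitian), and suppose that for every finitely supported x : ℕ → ℂ one has 0 ≤ (∑ i, ∑ j, conj (x i) * K i j * x j).re and (∑ i, ∑ j, conj (x i) * K i j * x j).re ≤ ∑ i, ‖x i‖² (i.e. K defines a nonnegative contraction). Then there exists a probability measure μ on the space ℕ → Bool (with the product σ-algebra, each factor having the ⊤ σ-algebra on Bool) such that for every S : Finset ℕ, μ {f | ∀ i ∈ S, f i = true} (as a real number, coerced to ℂ) equals the determinant of the S.card × S.card matrix whose (a,b) entry is K (S.orderEmbOfFin rfl a) (S.orderEmbOfFin rfl b). -/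

import Mathlib

open scoped ComplexConjugate

/-- Determinant of the principal submatrix of `K : ℕ → ℕ → ℂ` on the finset `S`. -/
noncomputable def detMinorNat (K : ℕ → ℕ → ℂ) (S : Finset ℕ) : ℂ :=
  (Matrix.of fun a b : Fin S.card =>
    K (S.orderEmbOfFin rfl a) (S.orderEmbOfFin rfl b)).det

section DetHelpers

open Matrix Filter Topology MeasureTheory
open scoped ComplexOrder

lemma det_block_nonneg {m n : Type*} [Fintype m] [Fintype n] [DecidableEq m] [DecidableEq n]
    (A : Matrix m m ℂ) (B : Matrix m n ℂ) (D : Matrix n n ℂ)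
    (hA : A.PosSemidef) (hD : D.PosSemidef) :
    0 ≤ (fromBlocks A B (-Bᴴ) D).det := by
  have key : ∀ ε : ℝ, 0 < ε → 0 ≤ (fromBlocks (A + (ε : ℂ) • (1 : Matrix m m ℂ)) B (-Bᴴ) D).det := by
    intro ε hε
    have hP : (A + (ε : ℂ) • (1 : Matrix m m ℂ)).PosDef := by
      refine PosDef.posSemidef_add hA ?_
      exact PosDef.smul PosDef.one (by exact_mod_cast hε)
    have : Invertible (A + (ε : ℂ) • (1 : Matrix m m ℂ)) := hP.isUnit.invertible
    rw [det_fromBlocks₁₁]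
    refine mul_nonneg hP.posSemidef.det_nonneg (PosSemidef.det_nonneg ?_)
    have h2 : (Bᴴ * ⅟(A + (ε : ℂ) • (1 : Matrix m m ℂ)) * B).PosSemidef := by
      rw [invOf_eq_nonsing_inv]
      exact hP.inv.posSemidef.conjTranspose_mul_mul_same B
    have := hD.add h2
    simpa [sub_eq_add_neg, Matrix.neg_mul] using this
  have hc : Continuous fun ε : ℝ =>
      (fromBlocks (A + (ε : ℂ) • (1 : Matrix m m ℂ)) B (-Bᴴ) D).det := by
    refine Continuous.matrix_det (Continuous.matrix_fromBlocks ?_ ?_ ?_ ?_) <;> fun_prop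
  have ht : Tendsto (fun ε : ℝ =>
      (fromBlocks (A + (ε : ℂ) • (1 : Matrix m m ℂ)) B (-Bᴴ) D).det) (𝓝[>] 0)
      (𝓝 (fromBlocks A B (-Bᴴ) D).det) := by
    have := (hc.tendsto 0).mono_left (nhdsWithin_le_nhds (s := Set.Ioi 0))
    simpa using this
  exact ge_of_tendsto ht (eventually_nhdsWithin_of_forall fun ε hε => key ε hε)

/-- rows of `M` or `1 - M` according to a pattern -/
noncomputable def patRow {ι : Type*} [DecidableEq ι] (M : Matrix ι ι ℂ) (i : ι) (b : Bool) :
    ι → ℂ :=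
  if b = true then M i else (1 - M) i

lemma pat_nonneg {ι : Type*} [Fintype ι] [DecidableEq ι] (M : Matrix ι ι ℂ)
    (hM : M.PosSemidef) (h1 : (1 - M).PosSemidef) (g : ι → Bool) :
    0 ≤ (Matrix.of fun i => patRow M i (g i)).det := by
  rw [det_toBlock _ (fun i => g i = true)]
  have := det_block_nonneg (toBlock M (fun i => g i = true) (fun i => g i = true))
    (toBlock M (fun i => g i = true) (fun i => ¬ g i = true))
    (toBlock (1 - M) (fun i => ¬ g i = true) (fun i => ¬ g i = true))
    (hM.submatrix _) (h1.submatrix _)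
  convert this using 3
  · ext i j
    have := i.2
    simp [toBlock_apply, patRow, this]
  · ext i j
    have := i.2
    simp [toBlock_apply, patRow, this]
  · ext i j
    have hi := i.2
    have hj := j.2
    have hne : (i : ι) ≠ j := fun h => hi (h ▸ hj)
    have := hM.1.apply i j
    simp only [RCLike.star_def] at this
    simp [toBlock_apply, patRow, hi, Matrix.one_apply, hne, this]
  · ext i j
    have := i.2
    simp [toBlock_apply, patRow, this]

lemma pat_sum {ι : Type*} [Fintype ι] [DecidableEq ι] (M : Matrix ι ι ℂ)
    (p : ι → Prop) [DecidablePred p] :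
    ∑ g : ι → Bool with ∀ i, p i → g i = true, (Matrix.of fun i => patRow M i (g i)).det =
      (toSquareBlockProp M p).det := by
  have h := (detRowAlternating (R := ℂ) (n := ι)).toMultilinearMap.map_sum_finset
    (fun i b => patRow M i b) (fun i => if p i then {true} else Finset.univ)
  have e : Fintype.piFinset (fun i => if p i then ({true} : Finset Bool) else Finset.univ) =
      Finset.univ.filter (fun g : ι → Bool => ∀ i, p i → g i = true) := by
    ext g
    simp only [Fintype.mem_piFinset, Finset.mem_filter, Finset.mem_univ, true_and]
    refine forall_congr' fun i => ?_
    by_cases hi : p i <;> simp [hi]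
  rw [e] at h
  refine Eq.trans h.symm ?_
  have h2 := twoBlockTriangular_det
    (Matrix.of fun i => ∑ j ∈ if p i then ({true} : Finset Bool) else Finset.univ, patRow M i j) p
    (by
      intro i hi j hj
      have hne : i ≠ j := fun h => hi (h ▸ hj)
      simp [hi, patRow, Matrix.one_apply, hne])
  refine Eq.trans h2 ?_
  have a1 : toSquareBlockProp (Matrix.of fun i =>
      ∑ j ∈ if p i then ({true} : Finset Bool) else Finset.univ, patRow M i j) p =
      toSquareBlockProp M p := by
    ext i j
    have := i.2
    simp [toSquareBlockProp_def, patRow, this]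
  have a2 : toSquareBlockProp (Matrix.of fun i =>
      ∑ j ∈ if p i then ({true} : Finset Bool) else Finset.univ, patRow M i j)
      (fun i => ¬ p i) = 1 := by
    ext i j
    have := i.2
    simp [toSquareBlockProp_def, patRow, this, Matrix.one_apply, Subtype.ext_iff]
  rw [a1, a2, det_one, mul_one]

lemma quad_eq (K : ℕ → ℕ → ℂ) (I : Finset ℕ) (x : I → ℂ) :
    ∃ y : ℕ →₀ ℂ, (∑ i ∈ y.support, ∑ j ∈ y.support, conj (y i) * K i j * y j) =
      star x ⬝ᵥ (Matrix.of fun i j : I => K i j) *ᵥ x ∧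
      ∑ i ∈ y.support, ‖y i‖ ^ 2 = (star x ⬝ᵥ x).re := by
  let y : ℕ →₀ ℂ := Finsupp.onFinset I (fun n => if h : n ∈ I then x ⟨n, h⟩ else 0)
    (by intro a ha; by_contra h; simp [h] at ha)
  have hs : y.support ⊆ I := Finsupp.support_onFinset_subset
  have hy : ∀ i : I, y i = x i := fun i => by simp [y]
  have h0 : ∀ i, i ∉ y.support → y i = 0 := fun i hi => by simpa using hi
  refine ⟨y, ?_, ?_⟩
  · have e1 : ∀ i, ∑ j ∈ y.support, conj (y i) * K i j * y j =
        ∑ j : I, conj (y i) * K i j * x j := by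
      intro i
      rw [Finset.sum_subset hs (fun j _ hj => by simp [h0 j hj]), ← Finset.sum_coe_sort]
      simp [hy]
    simp_rw [e1]
    rw [Finset.sum_subset hs (fun j _ hj => by simp [h0 j hj]), ← Finset.sum_coe_sort]
    simp only [hy, dotProduct, mulVec, Finset.mul_sum, Matrix.of_apply, Pi.star_apply,
      RCLike.star_def, mul_assoc]
  · rw [Finset.sum_subset hs (fun j _ hj => by simp [h0 j hj]), ← Finset.sum_coe_sort]
    simp only [hy, dotProduct, Pi.star_apply, RCLike.star_def, Complex.re_sum]
    refine Finset.sum_congr rfl fun i _ => ?_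
    rw [mul_comm, Complex.mul_conj, Complex.normSq_eq_norm_sq]
    norm_cast

lemma finite_det (K : ℕ → ℕ → ℂ)
    (hherm : ∀ i j, K j i = conj (K i j))
    (hpos : ∀ x : ℕ →₀ ℂ,
      0 ≤ (∑ i ∈ x.support, ∑ j ∈ x.support, conj (x i) * K i j * x j).re)
    (hcon : ∀ x : ℕ →₀ ℂ,
      (∑ i ∈ x.support, ∑ j ∈ x.support, conj (x i) * K i j * x j).re ≤
        ∑ i ∈ x.support, ‖x i‖ ^ 2) (I : Finset ℕ) :
    ∃ μ : Measure (ℕ → Bool), IsProbabilityMeasure μ ∧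
      ∀ S ⊆ I, ((μ {f : ℕ → Bool | ∀ i ∈ S, f i = true}).toReal : ℂ) = detMinorNat K S := by
  classical
  set M : Matrix I I ℂ := Matrix.of fun i j : I => K i j with hMdef
  have hH : M.IsHermitian := by
    ext i j
    simp [M, hherm i j]
  have hM : M.PosSemidef := by
    refine .of_dotProduct_mulVec_nonneg hH fun x => ?_
    obtain ⟨y, hy, -⟩ := quad_eq K I x
    rw [Complex.nonneg_iff]
    exact ⟨hy ▸ hpos y, (hH.im_star_dotProduct_mulVec_self x).symm⟩
  have hH1 : (1 - M).IsHermitian := isHermitian_one.sub hH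
  have hM1 : (1 - M).PosSemidef := by
    refine .of_dotProduct_mulVec_nonneg hH1 fun x => ?_
    obtain ⟨y, hy, hy2⟩ := quad_eq K I x
    rw [Complex.nonneg_iff]
    refine ⟨?_, (hH1.im_star_dotProduct_mulVec_self x).symm⟩
    have := hcon y
    rw [hy, hy2] at this
    rw [sub_mulVec, one_mulVec, dotProduct_sub, Complex.sub_re]
    linarith
  let w : (I → Bool) → ℂ := fun g => (Matrix.of fun i => patRow M i (g i)).det
  have hw : ∀ g, 0 ≤ w g := pat_nonneg M hM hM1
  have hwre : ∀ g, ((w g).re : ℂ) = w g := fun g => by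
    have := Complex.nonneg_iff.1 (hw g)
    exact Complex.ext rfl (by simpa using this.2)
  let ex : (I → Bool) → (ℕ → Bool) := fun g n => if h : n ∈ I then g ⟨n, h⟩ else false
  let μ : Measure (ℕ → Bool) := ∑ g : I → Bool, ENNReal.ofReal (w g).re • Measure.dirac (ex g)
  have hmeas : ∀ S : Finset ℕ, MeasurableSet {f : ℕ → Bool | ∀ i ∈ S, f i = true} := by
    intro S
    have : {f : ℕ → Bool | ∀ i ∈ S, f i = true} = ⋂ i ∈ S, {f | f i = true} := by
      ext f; simp
    rw [this]
    refine Finset.measurableSet_biInter _ fun i _ => ?_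
    exact (MeasurableSet.singleton true).preimage (measurable_pi_apply i)
  have hval : ∀ S ⊆ I, μ {f : ℕ → Bool | ∀ i ∈ S, f i = true} =
      ENNReal.ofReal (detMinorNat K S).re ∧ 0 ≤ detMinorNat K S := by
    intro S hS
    have hsum := pat_sum M (fun i : I => (i : ℕ) ∈ S)
    have hdet : (toSquareBlockProp M (fun i : I => (i : ℕ) ∈ S)).det = detMinorNat K S := by
      let e : Fin S.card ≃ {i : I // (i : ℕ) ∈ S} :=
        (S.orderIsoOfFin rfl).toEquiv.trans
          { toFun := fun s => ⟨⟨s, hS s.2⟩, s.2⟩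
            invFun := fun i => ⟨i.1, i.2⟩
            left_inv := fun _ => rfl
            right_inv := fun _ => rfl }
      rw [← det_submatrix_equiv_self e, detMinorNat]
      rfl
    rw [hdet] at hsum
    refine ⟨?_, hsum ▸ Finset.sum_nonneg fun g _ => hw g⟩
    rw [← hsum, Complex.re_sum, ENNReal.ofReal_sum_of_nonneg
      (fun g _ => (Complex.nonneg_iff.1 (hw g)).1), Finset.sum_filter]
    simp only [μ, Measure.finsetSum_apply, Measure.smul_apply, smul_eq_mul]
    refine Finset.sum_congr rfl fun g _ => ?_
    rw [Measure.dirac_apply' _ (hmeas S)]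
    have : ex g ∈ {f : ℕ → Bool | ∀ i ∈ S, f i = true} ↔
        ∀ i : I, (i : ℕ) ∈ S → g i = true := by
      simp only [Set.mem_setOf_eq, ex]
      constructor
      · intro h i hi
        simpa using h i hi
      · intro h i hi
        simpa [hS hi] using h ⟨i, hS hi⟩ hi
    by_cases h : ∀ i : I, (i : ℕ) ∈ S → g i = true
    · rw [Set.indicator_of_mem (this.2 h), if_pos h]
      simp [w]
    · rw [Set.indicator_of_notMem (fun h' => h (this.1 h')), if_neg h]
      simp
  refine ⟨μ, ⟨?_⟩, fun S hS => ?_⟩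
  · have := (hval ∅ (Finset.empty_subset _)).1
    have h1 : detMinorNat K ∅ = 1 := by
      have : IsEmpty (Fin (∅ : Finset ℕ).card) := by
        rw [Finset.card_empty]; infer_instance
      exact det_isEmpty
    rw [h1] at this
    simpa using this
  · obtain ⟨h1, h2⟩ := hval S hS
    have h3 := Complex.nonneg_iff.1 h2
    rw [h1, ENNReal.toReal_ofReal h3.1]
    exact Complex.ext rfl (by simpa using h3.2)

end DetHelpers

theorem determinantal_exists_countable (K : ℕ → ℕ → ℂ)
    (hherm : ∀ i j, K j i = conj (K i j))
    (hpos : ∀ x : ℕ →₀ ℂ,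
      0 ≤ (∑ i ∈ x.support, ∑ j ∈ x.support, conj (x i) * K i j * x j).re)
    (hcon : ∀ x : ℕ →₀ ℂ,
      (∑ i ∈ x.support, ∑ j ∈ x.support, conj (x i) * K i j * x j).re ≤
        ∑ i ∈ x.support, ‖x i‖ ^ 2) :
    ∃ μ : MeasureTheory.Measure (ℕ → Bool), MeasureTheory.IsProbabilityMeasure μ ∧
      ∀ S : Finset ℕ,
        ((μ {f : ℕ → Bool | ∀ i ∈ S, f i = true}).toReal : ℂ) = detMinorNat K S := by
  choose ν hν hνS using finite_det K hherm hpos hcon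
  let P : Finset ℕ → MeasureTheory.ProbabilityMeasure (ℕ → Bool) := fun I => ⟨ν I, hν I⟩
  obtain ⟨μ, hμ⟩ := exists_clusterPt_of_compactSpace (Filter.map P Filter.atTop)
  refine ⟨μ, inferInstance, fun S => ?_⟩
  have hclopen : IsClopen {f : ℕ → Bool | ∀ i ∈ S, f i = true} := by
    have : {f : ℕ → Bool | ∀ i ∈ S, f i = true} = ⋂ i ∈ S, {f | f i = true} := by
      ext f; simp
    rw [this]
    refine isClopen_biInter_finset fun i _ => ?_
    exact (isClopen_discrete {true}).preimage (continuous_apply i)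
  have hcont : Continuous fun ρ : MeasureTheory.ProbabilityMeasure (ℕ → Bool) =>
      ((((ρ : MeasureTheory.Measure (ℕ → Bool)) {f : ℕ → Bool | ∀ i ∈ S, f i = true}).toReal : ℝ) : ℂ) := by
    refine Complex.continuous_ofReal.comp (continuous_iff_continuousAt.2 fun ρ => ?_)
    have := MeasureTheory.ProbabilityMeasure.tendsto_measure_of_null_frontier_of_tendsto'
      (μ := ρ) (μs := id) (L := nhds ρ) Filter.tendsto_id
      (E := {f : ℕ → Bool | ∀ i ∈ S, f i = true}) (by simp [hclopen.frontier_eq])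
    exact (ENNReal.tendsto_toReal (MeasureTheory.measure_ne_top _ _)).comp this
  have hclosed := isClosed_eq hcont (continuous_const (y := detMinorNat K S))
  suffices hmem : μ ∈ {ρ : MeasureTheory.ProbabilityMeasure (ℕ → Bool) |
      ((((ρ : MeasureTheory.Measure (ℕ → Bool))
        {f : ℕ → Bool | ∀ i ∈ S, f i = true}).toReal : ℝ) : ℂ) = detMinorNat K S} from hmem
  refine IsClosed.mem_of_frequently_of_tendsto (f := id)
    (b := nhds μ ⊓ Filter.map P Filter.atTop) hclosed ?_ ?_
  · have : (nhds μ ⊓ Filter.map P Filter.atTop).NeBot := hμ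
    refine Filter.Eventually.frequently (Filter.Eventually.filter_mono inf_le_right ?_)
    rw [Filter.eventually_map]
    filter_upwards [Filter.eventually_ge_atTop S] with I hI
    exact hνS I S hI
  · exact Filter.tendsto_id.mono_left inf_le_left
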